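/- Let (W, r_1, …, r_n) be a Strip Packing instance in which every rectangle is a square (w_r = h_r for all r), with the rectangles listed in the FQW-ordering, and let h_BL be the height of the Bottom-Left packing for this ordering. Then h_BL ≤ 2 · h_OPT. -/

import Mathlib

open scoped Classical
open MeasureTheory

/-- An axis-parallel rectangle, given by its width and its height. -/
structure Rect where
  w : ℝ
  h : ℝ

/-- A Strip Packing instance: a strip of width `W > 0` and `n` rectangles
`r 0, …, r (n-1)`, each with positive height and width at most `W`. -/
structure SPInstance (n : ℕ) where
  W : ℝ
  r : Fin n → Rect
  W_pos : 0 < W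
  w_pos : ∀ i, 0 < (r i).w
  w_le_W : ∀ i, (r i).w ≤ W
  h_pos : ∀ i, 0 < (r i).h

/-- The open box of rectangle `R` placed at position `p`. -/
def openBox (R : Rect) (p : ℝ × ℝ) : Set (ℝ × ℝ) :=
  Set.Ioo p.1 (p.1 + R.w) ×ˢ Set.Ioo p.2 (p.2 + R.h)

/-- The closed box of rectangle `R` placed at position `p`. -/
def closedBox (R : Rect) (p : ℝ × ℝ) : Set (ℝ × ℝ) :=
  Set.Icc p.1 (p.1 + R.w) ×ˢ Set.Icc p.2 (p.2 + R.h)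

namespace SPInstance

variable {n : ℕ}

/-- Rectangle `i` placed at `p` lies inside the strip. -/
def InStrip (I : SPInstance n) (i : Fin n) (p : ℝ × ℝ) : Prop :=
  0 ≤ p.1 ∧ p.1 + (I.r i).w ≤ I.W ∧ 0 ≤ p.2

/-- `pos` is a feasible packing: each rectangle lies in the strip and the open
boxes are pairwise disjoint. -/
def Feasible (I : SPInstance n) (pos : Fin n → ℝ × ℝ) : Prop :=
  (∀ i, I.InStrip i (pos i)) ∧
    Pairwise (fun i j : Fin n =>
      Disjoint (openBox (I.r i) (pos i)) (openBox (I.r j) (pos j)))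

/-- The height of a packing, `max_i (y_i + h_i)`. -/
noncomputable def height (I : SPInstance n) (pos : Fin n → ℝ × ℝ) : ℝ :=
  ⨆ i, ((pos i).2 + (I.r i).h)

/-- The minimum height of a feasible packing. -/
noncomputable def hOPT (I : SPInstance n) : ℝ :=
  sInf {H | ∃ pos, I.Feasible pos ∧ I.height pos = H}

/-- The maximum height of a rectangle of the instance. -/
noncomputable def hmax (I : SPInstance n) : ℝ :=
  ⨆ i, (I.r i).h

/-- Rectangle `i` can feasibly be placed at `p`, given the rectangles
`j < i` already placed at `pos j`. -/
def FeasibleAt (I : SPInstance n) (pos : Fin n → ℝ × ℝ) (i : Fin n) (p : ℝ × ℝ) : Prop :=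
  I.InStrip i p ∧ ∀ j : Fin n, j < i →
    Disjoint (openBox (I.r i) p) (openBox (I.r j) (pos j))

/-- `pos` is the Bottom-Left packing for the ordering `r 0, r 1, …`: every
rectangle is feasibly placed, at the lexicographically minimal `(y, x)`. -/
def IsBL (I : SPInstance n) (pos : Fin n → ℝ × ℝ) : Prop :=
  ∀ i : Fin n, I.FeasibleAt pos i (pos i) ∧
    ∀ p : ℝ × ℝ, I.FeasibleAt pos i p →
      (pos i).2 < p.2 ∨ ((pos i).2 = p.2 ∧ (pos i).1 ≤ p.1)

/-- Greedy construction of the set `F` of the FQW-partition, processing the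
rectangles in the order `σ 0, σ 1, …` and adding a rectangle whenever the
total width of `F` stays at most `W`. -/
noncomputable def greedyF (I : SPInstance n) (σ : Equiv.Perm (Fin n)) : Finset (Fin n) :=
  (List.finRange n).foldl
    (fun F k =>
      if (I.r (σ k)).w + ∑ f ∈ F, (I.r f).w ≤ I.W then insert (σ k) F else F) ∅

end SPInstance

/-- An FQW-partition datum: a processing order `σ` of the rectangles that is
sorted by decreasing height. -/
structure FQW {n : ℕ} (I : SPInstance n) where
  σ : Equiv.Perm (Fin n)
  sorted : ∀ k k' : Fin n, k ≤ k' → (I.r (σ k')).h ≤ (I.r (σ k)).h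

namespace FQW

variable {n : ℕ} {I : SPInstance n}

/-- The set `F` of the FQW-partition. -/
noncomputable def F (d : FQW I) : Finset (Fin n) := I.greedyF d.σ

/-- The set `𝒲` of the FQW-partition: rectangles not in `F` of width
greater than `W/2`. -/
noncomputable def Wset (d : FQW I) : Finset (Fin n) :=
  Finset.univ.filter fun i => i ∉ d.F ∧ I.W / 2 < (I.r i).w

/-- The set `Q` of the FQW-partition: all remaining rectangles. -/
noncomputable def Q (d : FQW I) : Finset (Fin n) :=
  Finset.univ.filter fun i => i ∉ d.F ∧ ¬ I.W / 2 < (I.r i).w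

/-- The rectangles of the instance are listed in the FQW-ordering: first `F`
sorted by decreasing height, then `Q` sorted by decreasing width, then `𝒲`. -/
def IsOrdered (d : FQW I) : Prop :=
  (∀ i : Fin n, i ∈ d.F ↔ (i : ℕ) < d.F.card) ∧
  (∀ i : Fin n, i ∈ d.Q ↔ d.F.card ≤ (i : ℕ) ∧ (i : ℕ) < d.F.card + d.Q.card) ∧
  (∀ i j : Fin n, (i : ℕ) ≤ (j : ℕ) → (j : ℕ) < d.F.card → (I.r j).h ≤ (I.r i).h) ∧
  (∀ i j : Fin n, d.F.card ≤ (i : ℕ) → (i : ℕ) ≤ (j : ℕ) →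
    (j : ℕ) < d.F.card + d.Q.card → (I.r j).w ≤ (I.r i).w)

end FQW

/-- `max {y_{r_1}, …, y_{r_i}}` (the first `i` rectangles, `0` if `i = 0`):
the lower boundary of the region `H_{i+1}` of the horizontal strip partition. -/
noncomputable def maxYBelow {n : ℕ} (pos : Fin n → ℝ × ℝ) (i : ℕ) : ℝ :=
  ⨆ j : {j : Fin n // (j : ℕ) < i}, (pos (j : Fin n)).2

namespace SPInstance

variable {n : ℕ}

/-- The horizontal line at height `t` is proper: it meets no top or
bottom face of a rectangle. -/
def ProperLine (I : SPInstance n) (pos : Fin n → ℝ × ℝ) (t : ℝ) : Prop :=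
  ∀ j : Fin n, t ≠ (pos j).2 ∧ t ≠ (pos j).2 + (I.r j).h

/-- Rectangle `j` intersects the horizontal line at height `t`. -/
def Intersects (I : SPInstance n) (pos : Fin n → ℝ × ℝ) (j : Fin n) (t : ℝ) : Prop :=
  (pos j).2 < t ∧ t < (pos j).2 + (I.r j).h

/-- The occupied part of the horizontal line at height `t`. -/
noncomputable def occupied (I : SPInstance n) (pos : Fin n → ℝ × ℝ) (t : ℝ) : Set ℝ :=
  ⋃ j ∈ {j : Fin n | I.Intersects pos j t}, Set.Icc (pos j).1 ((pos j).1 + (I.r j).w)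

/-- The occupied fraction of the horizontal line at height `t`. -/
noncomputable def occFrac (I : SPInstance n) (pos : Fin n → ℝ × ℝ) (t : ℝ) : ℝ :=
  (volume (I.occupied pos t)).toReal / I.W

/-- The region `H_{i+1}` (for the `0`-based index `i`) of the horizontal strip
partition: `[0, W] × [max {y_{r_1}, …, y_{r_i}}, y_{r_{i+1}})`. -/
def regionH (I : SPInstance n) (pos : Fin n → ℝ × ℝ) (i : Fin n) : Set (ℝ × ℝ) :=
  Set.Icc 0 I.W ×ˢ Set.Ico (maxYBelow pos (i : ℕ)) (pos i).2

/-- `G` is an unoccupied gap of the horizontal line at height `t`: a maximal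
subinterval of `[0, W]` disjoint from the occupied part of the line. -/
def IsGap (I : SPInstance n) (pos : Fin n → ℝ × ℝ) (t : ℝ) (G : Set ℝ) : Prop :=
  G.Nonempty ∧ G ⊆ Set.Icc 0 I.W ∧ G.OrdConnected ∧ Disjoint G (I.occupied pos t) ∧
    ∀ G' : Set ℝ, G'.OrdConnected → G' ⊆ Set.Icc 0 I.W →
      Disjoint G' (I.occupied pos t) → G ⊆ G' → G' = G

/-- `j` is a left supporter of `i`: it comes before `i` in the ordering, its
right face touches the left face of `i`, and their open `y`-ranges intersect. -/
def IsLeftSupporter (I : SPInstance n) (pos : Fin n → ℝ × ℝ) (i j : Fin n) : Prop :=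
  j < i ∧ (pos j).1 + (I.r j).w = (pos i).1 ∧
    (pos j).2 < (pos i).2 + (I.r i).h ∧ (pos i).2 < (pos j).2 + (I.r j).h

/-- `j` is a bottom supporter of `i`: it comes before `i` in the ordering, its
top face touches the bottom face of `i`, and their open `x`-ranges intersect. -/
def IsBottomSupporter (I : SPInstance n) (pos : Fin n → ℝ × ℝ) (i j : Fin n) : Prop :=
  j < i ∧ (pos j).2 + (I.r j).h = (pos i).2 ∧
    (pos j).1 < (pos i).1 + (I.r i).w ∧ (pos i).1 < (pos j).1 + (I.r j).w

/-- `j` is the leftmost bottom supporter of `i`. -/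
def IsLeftmostBottomSupporter (I : SPInstance n) (pos : Fin n → ℝ × ℝ)
    (i j : Fin n) : Prop :=
  I.IsBottomSupporter pos i j ∧
    ∀ j' : Fin n, I.IsBottomSupporter pos i j' → (pos j).1 ≤ (pos j').1

end SPInstance

/-- `iT` is the top rectangle `r_T` of `Q`: the rectangle of `Q` whose top face
is highest, ties broken by highest bottom face. -/
def IsTopRect {n : ℕ} (I : SPInstance n) (d : FQW I) (pos : Fin n → ℝ × ℝ)
    (iT : Fin n) : Prop :=
  iT ∈ d.Q ∧ ∀ j ∈ d.Q,
    (pos j).2 + (I.r j).h < (pos iT).2 + (I.r iT).h ∨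
    ((pos j).2 + (I.r j).h = (pos iT).2 + (I.r iT).h ∧ (pos j).2 ≤ (pos iT).2)

/-- `iL` is the left rectangle `r_L` of `Q`: the first rectangle of `Q` in the
ordering touching the left strip boundary, and `r_T` if there is none. -/
def IsLeftRect {n : ℕ} (I : SPInstance n) (d : FQW I) (pos : Fin n → ℝ × ℝ)
    (iT iL : Fin n) : Prop :=
  (iL ∈ d.Q ∧ (pos iL).1 = 0 ∧ ∀ j ∈ d.Q, (pos j).1 = 0 → iL ≤ j) ∨
  ((∀ j ∈ d.Q, (pos j).1 ≠ 0) ∧ iL = iT)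

/-- The region `H' = [0, W] × ([0, h_{r_T}] ∪ [y_{r_T}, y_{r_T} + h_{r_T}])`. -/
def Hprime {n : ℕ} (I : SPInstance n) (pos : Fin n → ℝ × ℝ) (iT : Fin n) :
    Set (ℝ × ℝ) :=
  Set.Icc 0 I.W ×ˢ
    (Set.Icc 0 (I.r iT).h ∪ Set.Icc (pos iT).2 ((pos iT).2 + (I.r iT).h))

/-- The type `T(ℓ)` of the proper horizontal line at height `t`: the rectangles
of `Q` intersecting the line whose index is smaller than the least index `j`
with `y_{r_j} > t` (equivalently, all rectangles with index at most theirs have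
bottom face at height at most `t`). -/
noncomputable def TypeOf {n : ℕ} (I : SPInstance n) (d : FQW I)
    (pos : Fin n → ℝ × ℝ) (t : ℝ) : Finset (Fin n) :=
  Finset.univ.filter fun i =>
    i ∈ d.Q ∧ I.Intersects pos i t ∧ ∀ j : Fin n, j ≤ i → (pos j).2 ≤ t

/-- `i` is `LM(ℓ)`: the rectangle of `T(ℓ)` with smallest `x`-coordinate. -/
def IsLM {n : ℕ} (I : SPInstance n) (d : FQW I) (pos : Fin n → ℝ × ℝ) (t : ℝ)
    (i : Fin n) : Prop :=
  i ∈ TypeOf I d pos t ∧ ∀ j ∈ TypeOf I d pos t, (pos i).1 ≤ (pos j).1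

/-- The horizontal line at height `t` lies in `H_{a+2} ∪ ⋯ ∪ H_L`, where `iL`
is the `0`-based index of `r_L` (so `L = iL + 1`, `1`-based). -/
def LineInHUnion {n : ℕ} (I : SPInstance n) (d : FQW I) (pos : Fin n → ℝ × ℝ)
    (iL : Fin n) (t : ℝ) : Prop :=
  ∃ m : Fin n, d.F.card + 1 ≤ (m : ℕ) ∧ m ≤ iL ∧
    maxYBelow pos (m : ℕ) ≤ t ∧ t < (pos m).2

/-- The space `H_{a+2} ∪ ⋯ ∪ H_L`, where `iL` is the `0`-based index of `r_L`. -/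
def regionHUnion {n : ℕ} (I : SPInstance n) (d : FQW I) (pos : Fin n → ℝ × ℝ)
    (iL : Fin n) : Set (ℝ × ℝ) :=
  ⋃ m ∈ {m : Fin n | d.F.card + 1 ≤ (m : ℕ) ∧ m ≤ iL}, I.regionH pos m

/-- The horizontal line at height `t` belongs to `L^k`: it is a proper line of
order `k` lying in `H_{a+2} ∪ ⋯ ∪ H_L`. -/
def InLk {n : ℕ} (I : SPInstance n) (d : FQW I) (pos : Fin n → ℝ × ℝ)
    (iL : Fin n) (k : ℕ) (t : ℝ) : Prop :=
  I.ProperLine pos t ∧ LineInHUnion I d pos iL t ∧ (TypeOf I d pos t).card = k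

/-- `i` belongs to `R^k`: it is `LM(ℓ)` for some line `ℓ ∈ L^k`. -/
def InRk {n : ℕ} (I : SPInstance n) (d : FQW I) (pos : Fin n → ℝ × ℝ)
    (iL : Fin n) (k : ℕ) (i : Fin n) : Prop :=
  ∃ t : ℝ, InLk I d pos iL k t ∧ IsLM I d pos t i

/-- `i` is `LM^k`: the rectangle of `R^k` with smallest `x`-coordinate,
ties broken by largest `y`-coordinate. -/
def IsLMk {n : ℕ} (I : SPInstance n) (d : FQW I) (pos : Fin n → ℝ × ℝ)
    (iL : Fin n) (k : ℕ) (i : Fin n) : Prop :=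
  InRk I d pos iL k i ∧ ∀ j : Fin n, InRk I d pos iL k j →
    (pos i).1 < (pos j).1 ∨ ((pos i).1 = (pos j).1 ∧ (pos j).2 ≤ (pos i).2)

/-- `v = x_F^ℓ` for the line `ℓ` at height `t`: the right face `x + w` of the
rightmost rectangle of `F` intersecting `ℓ`, and `0` if there is none. -/
def IsXF {n : ℕ} (I : SPInstance n) (d : FQW I) (pos : Fin n → ℝ × ℝ)
    (t v : ℝ) : Prop :=
  ((∃ f ∈ d.F, I.Intersects pos f t ∧ v = (pos f).1 + (I.r f).w) ∧
    ∀ f ∈ d.F, I.Intersects pos f t → (pos f).1 + (I.r f).w ≤ v) ∨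
  ((∀ f ∈ d.F, ¬ I.Intersects pos f t) ∧ v = 0)

/-!
Two quantities bound the optimum from below: the largest height, and the total area divided by `W`.
The rectangles of `F` all land on the floor, so their tops are below the largest height; for every
other rectangle `i` the area of `r_0, …, r_i` is at least half of the strip below the top of `i`.

For `i ∈ Q` this is seen by sweeping a horizontal line upwards. Below `h_i` the line already meets
width `W - w_i` of `F`, because `i` was refused by the greedy selection. Between `h_i` and `y_i` it
meets width at least `W / 2`: the first rectangle `m` placed above the line found no gap of width
`w_m` there, whereas every earlier rectangle it meets is at least as wide as `m`: by the order of
`Q`, or, for one in `F`, because it is taller than `m`, and a taller square is wider. The area of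
`i` itself compensates the deficit `w_i` of the lowest part. A rectangle of `𝒲` lies no higher than
the highest earlier top, and fills more than half of the strip along its own height.
-/

lemma sum_Iio_add_le_sum_Iio {ι M : Type*} [PartialOrder ι] [LocallyFiniteOrderBot ι]
    [AddCommMonoid M] [PartialOrder M] [IsOrderedAddMonoid M] {f : ι → M}
    (hf : ∀ i, 0 ≤ f i) {i j : ι} (hij : i < j) :
    ∑ k ∈ Finset.Iio i, f k + f i ≤ ∑ k ∈ Finset.Iio j, f k := by
  rw [Finset.sum_Iio_add_eq_sum_Iic]
  exact Finset.sum_le_sum_of_subset_of_nonneg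
    (fun k hk => Finset.mem_Iio.2 ((Finset.mem_Iic.1 hk).trans_lt hij)) fun k _ _ => hf k

lemma integrable_indicator_Ico_const (a b c : ℝ) :
    Integrable ((Set.Ico a b).indicator fun _ => c) :=
  (integrable_indicator_iff measurableSet_Ico).2 (integrableOn_const measure_Ico_lt_top.ne)

/-! ### Intervals on a line -/

section Intervals

variable {ι : Type*} {s : Finset ι} {x w : ι → ℝ} {a b : ℝ}

lemma disjoint_Ioo_add_iff {p q u v : ℝ} (hu : 0 < u) (hv : 0 < v) :
    Disjoint (Set.Ioo p (p + u)) (Set.Ioo q (q + v)) ↔ p + u ≤ q ∨ q + v ≤ p := by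
  rw [Set.Ioo_disjoint_Ioo, min_le_iff, le_max_iff, le_max_iff]
  grind

lemma sum_length_le_of_pairwise_separated (hab : a ≤ b) (hw : ∀ i ∈ s, 0 ≤ w i)
    (hx : ∀ i ∈ s, a ≤ x i ∧ x i + w i ≤ b)
    (hsep : (s : Set ι).Pairwise fun i j => x i + w i ≤ x j ∨ x j + w j ≤ x i) :
    ∑ i ∈ s, w i ≤ b - a := by
  have hdisj : (s : Set ι).PairwiseDisjoint fun i => Set.Ico (x i) (x i + w i) := by
    intro i hi j hj hij
    refine Set.disjoint_left.2 fun u hui huj => ?_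
    rcases hsep hi hj hij with h | h <;> linarith [hui.1, hui.2, huj.1, huj.2]
  have hsub : ⋃ i ∈ s, Set.Ico (x i) (x i + w i) ⊆ Set.Icc a b :=
    Set.iUnion₂_subset fun i hi =>
      Set.Ico_subset_Icc_self.trans (Set.Icc_subset_Icc (hx i hi).1 (hx i hi).2)
  have hvol := measure_mono (μ := volume) hsub
  rw [measure_biUnion_finset hdisj fun _ _ => measurableSet_Ico] at hvol
  simp only [Real.volume_Ico, Real.volume_Icc, add_sub_cancel_left] at hvol
  rwa [← ENNReal.ofReal_sum_of_nonneg hw, ENNReal.ofReal_le_ofReal_iff (sub_nonneg.2 hab)] at hvol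

lemma sub_le_sum_length_of_subset_biUnion (hw : ∀ i ∈ s, 0 ≤ w i)
    (hcov : Set.Icc a b ⊆ ⋃ i ∈ s, Set.Icc (x i) (x i + w i)) :
    b - a ≤ ∑ i ∈ s, w i := by
  have hvol := (measure_mono (μ := volume) hcov).trans (measure_biUnion_finset_le s _)
  simp only [Real.volume_Icc, add_sub_cancel_left] at hvol
  rwa [← ENNReal.ofReal_sum_of_nonneg hw,
    ENNReal.ofReal_le_ofReal_iff (Finset.sum_nonneg hw)] at hvol

-- Every gap is shorter than the interval to its left, so doubling each interval to the right
-- covers everything.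
lemma sub_le_two_mul_sum_length_of_no_gap {g : ℝ} (hg : 0 < g) (hw : ∀ i ∈ s, g ≤ w i)
    (hsep : (s : Set ι).Pairwise fun i j => x i + w i ≤ x j ∨ x j + w j ≤ x i)
    (hgap : ∀ p, a ≤ p → p + g ≤ b → ∃ j ∈ s, x j < p + g ∧ p < x j + w j)
    (hleft : ∃ l ∈ s, x l = a) :
    b - a ≤ 2 * ∑ i ∈ s, w i := by
  rw [Finset.mul_sum]
  refine sub_le_sum_length_of_subset_biUnion (x := x)
    (fun i hi => by linarith [hw i hi]) fun u ⟨hau, hub⟩ => ?_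
  obtain ⟨l, hl, rfl⟩ := hleft
  obtain ⟨i, hi, hmax⟩ := (s.filter fun i => x i ≤ u).exists_max_image x
    ⟨l, Finset.mem_filter.2 ⟨hl, hau⟩⟩
  have hli := hmax l (Finset.mem_filter.2 ⟨hl, hau⟩)
  obtain ⟨his, hiu⟩ := Finset.mem_filter.1 hi
  refine Set.mem_iUnion₂.2 ⟨i, his, hiu, le_of_not_gt fun hlt => ?_⟩
  have hwi := hw i his
  obtain ⟨j, hj, hjl, hjr⟩ := hgap (x i + w i) (by linarith) (by linarith)
  have hji := hmax j (Finset.mem_filter.2 ⟨hj, by linarith⟩)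
  have hij : i ≠ j := by rintro rfl; linarith
  rcases hsep his hj hij with h | h <;> linarith [hw j hj]

end Intervals

/-! ### Greedy selection -/

section Greedy

variable {ι : Type*} [DecidableEq ι]

/-- Greedy selection along a list: an item is taken whenever the total weight of the selected items
stays at most `W`. With the list in order of decreasing height this is the set `F` of the
FQW-partition. -/
noncomputable def greedySelect (w : ι → ℝ) (W : ℝ) (l : List ι) : Finset ι :=
  l.foldl (fun F k => if w k + ∑ f ∈ F, w f ≤ W then insert k F else F) ∅

variable {w : ι → ℝ} {W : ℝ}

lemma greedySelect_concat (l : List ι) (k : ι) :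
    greedySelect w W (l ++ [k]) =
      if w k + ∑ f ∈ greedySelect w W l, w f ≤ W then insert k (greedySelect w W l)
      else greedySelect w W l := by
  rw [greedySelect, List.foldl_append]
  rfl

lemma greedySelect_subset_concat (l : List ι) (k : ι) :
    greedySelect w W l ⊆ greedySelect w W (l ++ [k]) := by
  rw [greedySelect_concat]
  split_ifs
  exacts [Finset.subset_insert _ _, subset_rfl]

lemma mem_of_mem_greedySelect {l : List ι} {f : ι} (hf : f ∈ greedySelect w W l) : f ∈ l := by
  induction l using List.reverseRecOn with
  | nil => simp [greedySelect] at hf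
  | append_singleton l k ih =>
    rw [greedySelect_concat] at hf
    split_ifs at hf <;> grind

lemma sum_greedySelect_le (hW : 0 ≤ W) (l : List ι) : ∑ f ∈ greedySelect w W l, w f ≤ W := by
  induction l using List.reverseRecOn with
  | nil => simpa [greedySelect] using hW
  | append_singleton l k ih =>
    rw [greedySelect_concat]
    split_ifs with hfit
    · by_cases hk : k ∈ greedySelect w W l
      · rwa [Finset.insert_eq_of_mem hk]
      · rwa [Finset.sum_insert hk]
    · exact ih

lemma lt_add_sum_of_notMem_greedySelect {α : Type*} [LinearOrder α] {h : ι → α}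
    (hw : ∀ i, 0 ≤ w i) {l : List ι} (hl : l.Pairwise fun k k' => h k' ≤ h k) {k : ι} (hk : k ∈ l)
    (hkF : k ∉ greedySelect w W l) :
    W < w k + ∑ f ∈ greedySelect w W l with h k ≤ h f, w f := by
  induction l using List.reverseRecOn with
  | nil => simp at hk
  | append_singleton l k' ih =>
    obtain ⟨hl, -, hlk'⟩ := List.pairwise_append.1 hl
    by_cases hkl : k ∈ l
    · have hsub := greedySelect_subset_concat (w := w) (W := W) l k'
      refine (ih hl hkl fun h => hkF (hsub h)).trans_le ?_
      gcongr
      exact fun i _ _ => hw i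
    · obtain rfl : k = k' := by simpa [hkl] using hk
      rw [greedySelect_concat] at hkF ⊢
      split_ifs at hkF ⊢ with hfit
      · exact absurd (Finset.mem_insert_self _ _) hkF
      · rw [Finset.filter_true_of_mem fun f hf =>
          hlk' f (mem_of_mem_greedySelect hf) k (List.mem_singleton_self k)]
        exact not_le.1 hfit

end Greedy

namespace SPInstance

variable {n : ℕ} {I : SPInstance n} {pos : Fin n → ℝ × ℝ}

/-! ### Horizontal lines and area -/

lemma disjoint_openBox_iff {i j : Fin n} {p q : ℝ × ℝ} :
    Disjoint (openBox (I.r i) p) (openBox (I.r j) q) ↔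
      (p.1 + (I.r i).w ≤ q.1 ∨ q.1 + (I.r j).w ≤ p.1) ∨
        (p.2 + (I.r i).h ≤ q.2 ∨ q.2 + (I.r j).h ≤ p.2) := by
  rw [openBox, openBox, Set.disjoint_prod, disjoint_Ioo_add_iff (I.w_pos i) (I.w_pos j),
    disjoint_Ioo_add_iff (I.h_pos i) (I.h_pos j)]

/-- The total area of the rectangles of `s`. -/
def area (I : SPInstance n) (s : Finset (Fin n)) : ℝ :=
  ∑ i ∈ s, (I.r i).w * (I.r i).h

/-- The rectangles of `s` crossed by the horizontal line at height `t`. A rectangle contains its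
bottom face but not its top face, so that no height has to be treated as exceptional. -/
noncomputable def crossing (I : SPInstance n) (pos : Fin n → ℝ × ℝ) (s : Finset (Fin n)) (t : ℝ) :
    Finset (Fin n) :=
  {i ∈ s | t ∈ Set.Ico (pos i).2 ((pos i).2 + (I.r i).h)}

/-- The total width of the rectangles of `s` crossed by the horizontal line at height `t`; its
integral over `t` is the area of `s`. -/
noncomputable def lineWidth (I : SPInstance n) (pos : Fin n → ℝ × ℝ) (s : Finset (Fin n)) (t : ℝ) :
    ℝ :=
  ∑ i ∈ I.crossing pos s t, (I.r i).w

lemma mem_crossing {s : Finset (Fin n)} {t : ℝ} {i : Fin n} :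
    i ∈ I.crossing pos s t ↔ i ∈ s ∧ (pos i).2 ≤ t ∧ t < (pos i).2 + (I.r i).h :=
  Finset.mem_filter

lemma area_mono : Monotone I.area := fun _ _ hst =>
  Finset.sum_le_sum_of_subset_of_nonneg hst fun i _ _ => (mul_pos (I.w_pos i) (I.h_pos i)).le

lemma area_nonneg (s : Finset (Fin n)) : 0 ≤ I.area s :=
  Finset.sum_nonneg fun i _ => (mul_pos (I.w_pos i) (I.h_pos i)).le

lemma area_Iic (i : Fin n) :
    I.area (Finset.Iic i) = (I.r i).w * (I.r i).h + I.area (Finset.Iio i) :=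
  (Finset.add_sum_Iio_eq_sum_Iic i).symm

lemma w_mul_h_le_area_Iic (i : Fin n) : (I.r i).w * (I.r i).h ≤ I.area (Finset.Iic i) := by
  rw [area_Iic]
  exact le_add_of_nonneg_right (area_nonneg _)

lemma lineWidth_mono (t : ℝ) : Monotone fun s => I.lineWidth pos s t := fun _ _ hst =>
  Finset.sum_le_sum_of_subset_of_nonneg (Finset.filter_subset_filter _ hst)
    fun i _ _ => (I.w_pos i).le

lemma lineWidth_Iic {i : Fin n} {t : ℝ} (hit : (pos i).2 ≤ t) (hti : t < (pos i).2 + (I.r i).h) :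
    I.lineWidth pos (Finset.Iic i) t = (I.r i).w + I.lineWidth pos (Finset.Iio i) t := by
  simp only [lineWidth, crossing, Finset.sum_filter]
  rw [← Finset.add_sum_Iio_eq_sum_Iic, if_pos ⟨hit, hti⟩]

lemma lineWidth_nonneg (s : Finset (Fin n)) (t : ℝ) : 0 ≤ I.lineWidth pos s t :=
  Finset.sum_nonneg fun i _ => (I.w_pos i).le

lemma lineWidth_eq_sum_indicator (s : Finset (Fin n)) :
    I.lineWidth pos s = fun t => ∑ i ∈ s,
      (Set.Ico (pos i).2 ((pos i).2 + (I.r i).h)).indicator (fun _ => (I.r i).w) t := by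
  funext t
  simp only [lineWidth, crossing, Finset.sum_filter, Set.indicator_apply]

lemma integrable_lineWidth (s : Finset (Fin n)) : Integrable (I.lineWidth pos s) := by
  rw [lineWidth_eq_sum_indicator]
  exact integrable_finsetSum _ fun i _ => integrable_indicator_Ico_const _ _ _

lemma integral_lineWidth (s : Finset (Fin n)) : ∫ t, I.lineWidth pos s t = I.area s := by
  rw [lineWidth_eq_sum_indicator,
    integral_finsetSum _ fun i _ => integrable_indicator_Ico_const _ _ _]
  refine Finset.sum_congr rfl fun i _ => ?_
  rw [integral_indicator_const _ measurableSet_Ico]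
  simp [(I.h_pos i).le, mul_comm]

lemma intervalIntegral_lineWidth_le_area (s : Finset (Fin n)) {a b : ℝ} (hab : a ≤ b) :
    ∫ t in a..b, I.lineWidth pos s t ≤ I.area s := by
  rw [intervalIntegral.integral_of_le hab, ← integral_lineWidth (pos := pos)]
  exact setIntegral_le_integral (integrable_lineWidth s) (.of_forall (lineWidth_nonneg s))

lemma mul_le_intervalIntegral_lineWidth {s : Finset (Fin n)} {a b c : ℝ} (hab : a ≤ b)
    (hc : ∀ t, a < t → t < b → c ≤ I.lineWidth pos s t) :
    (b - a) * c ≤ ∫ t in a..b, I.lineWidth pos s t := by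
  rw [← smul_eq_mul, ← intervalIntegral.integral_const]
  exact intervalIntegral.integral_mono_on_of_le_Ioo hab intervalIntegrable_const
    (integrable_lineWidth s).intervalIntegrable fun t ht => hc t ht.1 ht.2

lemma Feasible.pairwise_crossing (hf : I.Feasible pos) (s : Finset (Fin n)) (t : ℝ) :
    (I.crossing pos s t : Set (Fin n)).Pairwise fun i j =>
      (pos i).1 + (I.r i).w ≤ (pos j).1 ∨ (pos j).1 + (I.r j).w ≤ (pos i).1 := by
  intro i hi j hj hij
  obtain ⟨-, hiy, hit⟩ := mem_crossing.1 hi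
  obtain ⟨-, hjy, hjt⟩ := mem_crossing.1 hj
  refine (disjoint_openBox_iff.1 (hf.2 hij)).resolve_right ?_
  rintro (h | h) <;> linarith

lemma Feasible.lineWidth_le (hf : I.Feasible pos) (s : Finset (Fin n)) (t : ℝ) :
    I.lineWidth pos s t ≤ I.W := by
  rw [← sub_zero I.W]
  exact sum_length_le_of_pairwise_separated (x := fun i => (pos i).1) I.W_pos.le
    (fun i _ => (I.w_pos i).le) (fun i _ => ⟨(hf.1 i).1, (hf.1 i).2.1⟩) (hf.pairwise_crossing s t)

/-! ### Lower bounds on the optimum -/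

lemma exists_feasible (I : SPInstance n) : ∃ pos, I.Feasible pos := by
  refine ⟨fun i => (0, ∑ j ∈ Finset.Iio i, (I.r j).h), fun i => ⟨le_rfl, ?_, ?_⟩, ?_⟩
  · simpa only [zero_add] using I.w_le_W i
  · exact Finset.sum_nonneg fun j _ => (I.h_pos j).le
  · have hstack {i j : Fin n} (hij : i < j) := sum_Iio_add_le_sum_Iio (fun k => (I.h_pos k).le) hij
    exact fun i j hij => disjoint_openBox_iff.2 (.inr (hij.lt_or_gt.imp hstack hstack))

lemma y_add_h_le_height (I : SPInstance n) (pos : Fin n → ℝ × ℝ) (i : Fin n) :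
    (pos i).2 + (I.r i).h ≤ I.height pos :=
  le_ciSup (f := fun i => (pos i).2 + (I.r i).h) (Set.finite_range _).bddAbove i

lemma Feasible.height_nonneg (hf : I.Feasible pos) : 0 ≤ I.height pos :=
  Real.iSup_nonneg fun i => add_nonneg (hf.1 i).2.2 (I.h_pos i).le

lemma Feasible.area_le (hf : I.Feasible pos) (s : Finset (Fin n)) :
    I.area s ≤ I.W * I.height pos := by
  have hzero : ∀ t ∉ Set.Icc 0 (I.height pos), I.lineWidth pos s t = 0 := fun t ht =>
    Finset.sum_eq_zero fun i hi => by
      obtain ⟨-, hiy, hit⟩ := mem_crossing.1 hi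
      exact absurd ⟨(hf.1 i).2.2.trans hiy, hit.le.trans (I.y_add_h_le_height pos i)⟩ ht
  calc I.area s = ∫ t in Set.Icc 0 (I.height pos), I.lineWidth pos s t := by
        rw [setIntegral_eq_integral_of_forall_compl_eq_zero hzero, integral_lineWidth]
    _ ≤ ∫ _ in Set.Icc 0 (I.height pos), I.W :=
        setIntegral_mono (integrable_lineWidth s).integrableOn
          (integrableOn_const measure_Icc_lt_top.ne) (hf.lineWidth_le s)
    _ = I.W * I.height pos := by simp [hf.height_nonneg, mul_comm]

lemma le_hOPT {c : ℝ} (hc : ∀ pos, I.Feasible pos → c ≤ I.height pos) : c ≤ I.hOPT := by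
  obtain ⟨pos, hf⟩ := I.exists_feasible
  refine le_csInf ⟨_, pos, hf, rfl⟩ ?_
  rintro _ ⟨pos', hf', rfl⟩
  exact hc pos' hf'

lemma h_le_hOPT (i : Fin n) : (I.r i).h ≤ I.hOPT :=
  le_hOPT fun pos hf => by linarith [(hf.1 i).2.2, I.y_add_h_le_height pos i]

lemma area_le_W_mul_hOPT (s : Finset (Fin n)) : I.area s ≤ I.W * I.hOPT := by
  rw [← div_le_iff₀' I.W_pos]
  exact le_hOPT fun pos hf => (div_le_iff₀' I.W_pos).2 (hf.area_le s)

/-! ### Bottom-Left packings -/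

lemma IsBL.feasible (hBL : I.IsBL pos) : I.Feasible pos := by
  refine ⟨fun i => (hBL i).1.1, fun i j hij => ?_⟩
  rcases hij.lt_or_gt with h | h
  · exact ((hBL j).1.2 i h).symm
  · exact (hBL i).1.2 j h

lemma IsBL.y_le (hBL : I.IsBL pos) {i : Fin n} {p : ℝ × ℝ} (hp : I.FeasibleAt pos i p) :
    (pos i).2 ≤ p.2 :=
  ((hBL i).2 p hp).elim le_of_lt fun h => h.1.le

lemma IsBL.x_le (hBL : I.IsBL pos) {i : Fin n} {p : ℝ × ℝ} (hp : I.FeasibleAt pos i p)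
    (hy : p.2 ≤ (pos i).2) : (pos i).1 ≤ p.1 :=
  ((hBL i).2 p hp).elim (fun h => absurd h hy.not_gt) And.right

lemma IsBL.y_eq_zero_and_x_le (hBL : I.IsBL pos) {i : Fin n}
    (hi : ∑ j ∈ Finset.Iic i, (I.r j).w ≤ I.W) :
    (pos i).2 = 0 ∧ (pos i).1 ≤ ∑ j ∈ Finset.Iio i, (I.r j).w := by
  induction i using WellFoundedLT.induction with
  | ind i ih =>
    have hfloor : I.FeasibleAt pos i (∑ j ∈ Finset.Iio i, (I.r j).w, 0) := by
      refine ⟨⟨Finset.sum_nonneg fun j _ => (I.w_pos j).le, ?_, le_rfl⟩,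
        fun j hj => disjoint_openBox_iff.2 (.inl (.inr ?_))⟩
      · rwa [Finset.sum_Iio_add_eq_sum_Iic (f := fun j => (I.r j).w)]
      · have hsum : ∑ k ∈ Finset.Iic j, (I.r k).w ≤ ∑ k ∈ Finset.Iic i, (I.r k).w :=
          Finset.sum_le_sum_of_subset_of_nonneg (Finset.Iic_subset_Iic.2 hj.le)
            fun k _ _ => (I.w_pos k).le
        calc (pos j).1 + (I.r j).w ≤ ∑ k ∈ Finset.Iio j, (I.r k).w + (I.r j).w := by
              gcongr; exact (ih j hj (hsum.trans hi)).2
          _ ≤ ∑ k ∈ Finset.Iio i, (I.r k).w :=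
              sum_Iio_add_le_sum_Iio (fun k => (I.w_pos k).le) hj
    exact ⟨(hBL.y_le hfloor).antisymm (hBL i).1.1.2.2, hBL.x_le hfloor (hBL i).1.1.2.2⟩

lemma IsBL.exists_lt_y_le_top (hBL : I.IsBL pos) {i : Fin n} (hi : 0 < (pos i).2) :
    ∃ j < i, (pos i).2 ≤ (pos j).2 + (I.r j).h := by
  have hlow {q : ℝ} (hq : 0 ≤ q) (htop : ∀ j < i, (pos j).2 + (I.r j).h ≤ q) : (pos i).2 ≤ q :=
    hBL.y_le (p := (0, q)) ⟨⟨le_rfl, by simpa only [zero_add] using I.w_le_W i, hq⟩,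
      fun j hj => disjoint_openBox_iff.2 (.inr (.inr (htop j hj)))⟩
  by_contra! hlt
  obtain hempty | hne := (Finset.Iio i).eq_empty_or_nonempty
  · exact hi.not_ge (hlow le_rfl fun j hj => absurd (Finset.mem_Iio.2 hj) (by simp [hempty]))
  · obtain ⟨j, hj, hmax⟩ := (Finset.Iio i).exists_max_image (fun j => (pos j).2 + (I.r j).h) hne
    exact (hlt j (Finset.mem_Iio.1 hj)).not_ge <|
      hlow (add_nonneg (hBL j).1.1.2.2 (I.h_pos j).le) fun k hk => hmax k (Finset.mem_Iio.2 hk)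

-- Otherwise `i` could be moved to the left boundary.
lemma IsBL.exists_left_of_x_pos (hBL : I.IsBL pos) {i : Fin n} (hi : 0 < (pos i).1) :
    ∃ j < i, (pos j).1 + (I.r j).w ≤ (pos i).1 ∧ (pos i).2 < (pos j).2 + (I.r j).h := by
  by_contra! hnone
  refine hi.not_ge (hBL.x_le (p := (0, (pos i).2))
    ⟨⟨le_rfl, by simpa only [zero_add] using I.w_le_W i, (hBL i).1.1.2.2⟩, fun j hj => ?_⟩ le_rfl)
  have hnone := hnone j hj
  rw [disjoint_openBox_iff]
  rcases disjoint_openBox_iff.1 ((hBL i).1.2 j hj) with (h | h) | h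
  · exact .inl (.inl (by dsimp only; linarith))
  · exact .inr (.inr (hnone h))
  · exact .inr h

variable {m : Fin n} {t : ℝ}

lemma IsBL.exists_mem_crossing_of_gap (hBL : I.IsBL pos) (ht : 0 ≤ t)
    (hm : IsLeast {i | t < (pos i).2} m) {p : ℝ} (hp : 0 ≤ p) (hpW : p + (I.r m).w ≤ I.W) :
    ∃ j ∈ I.crossing pos (Finset.Iio m) t,
      (pos j).1 < p + (I.r m).w ∧ p < (pos j).1 + (I.r j).w := by
  by_contra! hfree
  refine (show t < (pos m).2 from hm.1).not_ge
    (hBL.y_le (p := (p, t)) ⟨⟨hp, hpW, ht⟩, fun j hj => disjoint_openBox_iff.2 ?_⟩)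
  by_cases hjt : t < (pos j).2 + (I.r j).h
  · have hyj : (pos j).2 ≤ t := not_lt.1 fun h => hj.not_ge (hm.2 h)
    exact .inl ((le_or_gt _ _).imp_right
      (hfree j (mem_crossing.2 ⟨Finset.mem_Iio.2 hj, hyj, hjt⟩)))
  · exact .inr (.inr (not_lt.1 hjt))

-- If the leftmost rectangle `l` on the line does not touch the boundary, whatever keeps `l` from
-- moving there is as wide as `m`, and `m` would fit to the left of `l`.
lemma IsBL.exists_mem_crossing_x_eq_zero (hBL : I.IsBL pos) (ht : 0 ≤ t)
    (hm : IsLeast {i | t < (pos i).2} m)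
    (hwide : ∀ l ∈ I.crossing pos (Finset.Iio m) t, ∀ j ≤ l, (pos l).2 < (pos j).2 + (I.r j).h →
      (I.r m).w ≤ (I.r j).w) :
    ∃ l ∈ I.crossing pos (Finset.Iio m) t, (pos l).1 = 0 := by
  obtain ⟨k, hk, hkx, -⟩ := hBL.exists_mem_crossing_of_gap ht hm le_rfl
    (by simpa only [zero_add] using I.w_le_W m)
  obtain ⟨l, hl, hleftmost⟩ := Finset.exists_min_image _ (fun j => (pos j).1) ⟨k, hk⟩
  refine ⟨l, hl, ((hBL l).1.1.1.eq_or_lt.resolve_right fun hxl => ?_).symm⟩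
  obtain ⟨j, hjl, hjx, hjy⟩ := hBL.exists_left_of_x_pos hxl
  have hwj := hwide l hl j hjl.le hjy
  linarith [hleftmost k hk, (hBL j).1.1.1]

lemma IsBL.W_le_two_mul_lineWidth (hBL : I.IsBL pos) (ht : 0 ≤ t)
    (hm : IsLeast {i | t < (pos i).2} m)
    (hwide : ∀ l ∈ I.crossing pos (Finset.Iio m) t, ∀ j ≤ l, (pos l).2 < (pos j).2 + (I.r j).h →
      (I.r m).w ≤ (I.r j).w) :
    I.W ≤ 2 * I.lineWidth pos (Finset.Iio m) t := by
  rw [← sub_zero I.W]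
  exact sub_le_two_mul_sum_length_of_no_gap (x := fun i => (pos i).1) (I.w_pos m)
    (fun i hi => hwide i hi i le_rfl (lt_add_of_pos_right _ (I.h_pos i)))
    (hBL.feasible.pairwise_crossing _ t) (fun p => hBL.exists_mem_crossing_of_gap ht hm)
    (hBL.exists_mem_crossing_x_eq_zero ht hm hwide)

end SPInstance

namespace FQW

variable {n : ℕ} {I : SPInstance n} {d : FQW I} {pos : Fin n → ℝ × ℝ} {i j : Fin n} {t : ℝ}

/-! ### The FQW-ordering -/

lemma F_eq_greedySelect (d : FQW I) :
    d.F = greedySelect (fun i => (I.r i).w) I.W ((List.finRange n).map d.σ) := by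
  rw [F, SPInstance.greedyF, greedySelect, List.foldl_map]

lemma sum_w_F_le (d : FQW I) : ∑ f ∈ d.F, (I.r f).w ≤ I.W := by
  rw [F_eq_greedySelect]
  exact sum_greedySelect_le I.W_pos.le _

lemma W_lt_w_add_sum_F (hi : i ∉ d.F) :
    I.W < (I.r i).w + ∑ f ∈ d.F with (I.r i).h ≤ (I.r f).h, (I.r f).w := by
  rw [F_eq_greedySelect] at hi ⊢
  refine lt_add_sum_of_notMem_greedySelect (h := fun j => (I.r j).h) (fun j => (I.w_pos j).le)
    ?_ ?_ hi
  · exact List.pairwise_map.2 ((List.pairwise_le_finRange n).imp (d.sorted _ _))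
  · exact List.mem_map.2 ⟨d.σ.symm i, List.mem_finRange _, d.σ.apply_symm_apply i⟩

lemma mem_Q_of_w_le (hi : i ∉ d.F) (hw : (I.r i).w ≤ I.W / 2) : i ∈ d.Q :=
  Finset.mem_filter.2 ⟨Finset.mem_univ _, hi, hw.not_gt⟩

lemma notMem_F_of_mem_Q (hi : i ∈ d.Q) : i ∉ d.F :=
  (Finset.mem_filter.1 hi).2.1

lemma w_le_of_mem_Q (hi : i ∈ d.Q) : (I.r i).w ≤ I.W / 2 :=
  not_lt.1 (Finset.mem_filter.1 hi).2.2

namespace IsOrdered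

lemma mem_F_of_le (hord : d.IsOrdered) (hij : i ≤ j) (hj : j ∈ d.F) : i ∈ d.F :=
  (hord.1 i).2 (lt_of_le_of_lt hij ((hord.1 j).1 hj))

lemma lt_of_mem_F_of_notMem_F (hord : d.IsOrdered) (hi : i ∈ d.F) (hj : j ∉ d.F) : i < j :=
  not_le.1 fun hji => hj (hord.mem_F_of_le hji hi)

lemma mem_Q_of_le (hord : d.IsOrdered) (hi : i ∉ d.F) (hij : i ≤ j) (hj : j ∈ d.Q) : i ∈ d.Q :=
  (hord.2.1 i).2 ⟨not_lt.1 (mt (hord.1 i).2 hi), lt_of_le_of_lt hij ((hord.2.1 j).1 hj).2⟩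

lemma h_le_of_mem_F (hord : d.IsOrdered) (hij : i ≤ j) (hj : j ∈ d.F) : (I.r j).h ≤ (I.r i).h :=
  hord.2.2.1 i j hij ((hord.1 j).1 hj)

lemma w_le_of_mem_Q (hord : d.IsOrdered) (hi : i ∉ d.F) (hij : i ≤ j) (hj : j ∈ d.Q) :
    (I.r j).w ≤ (I.r i).w :=
  hord.2.2.2 i j (not_lt.1 (mt (hord.1 i).2 hi)) hij ((hord.2.1 j).1 hj).2

lemma y_eq_zero (hord : d.IsOrdered) (hBL : I.IsBL pos) (hi : i ∈ d.F) : (pos i).2 = 0 :=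
  (hBL.y_eq_zero_and_x_le <| (Finset.sum_le_sum_of_subset_of_nonneg
    (fun _ hj => hord.mem_F_of_le (Finset.mem_Iic.1 hj) hi)
    fun j _ _ => (I.w_pos j).le).trans d.sum_w_F_le).1

lemma W_lt_w_add_lineWidth (hord : d.IsOrdered) (hBL : I.IsBL pos) (hi : i ∉ d.F)
    (ht : 0 ≤ t) (hti : t < (I.r i).h) :
    I.W < (I.r i).w + I.lineWidth pos (Finset.Iio i) t := by
  refine (W_lt_w_add_sum_F hi).trans_le (add_le_add_right ?_ _)
  refine Finset.sum_le_sum_of_subset_of_nonneg (fun f hf => ?_) fun j _ _ => (I.w_pos j).le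
  obtain ⟨hfF, hfi⟩ := Finset.mem_filter.1 hf
  have hyf := hord.y_eq_zero hBL hfF
  exact SPInstance.mem_crossing.2 ⟨Finset.mem_Iio.2 (hord.lt_of_mem_F_of_notMem_F hfF hi),
    by linarith, by linarith⟩

lemma h_le_y (hord : d.IsOrdered) (hBL : I.IsBL pos) (hi : i ∉ d.F) : (I.r i).h ≤ (pos i).2 := by
  by_contra! hlt
  have hline := hBL.feasible.lineWidth_le (Finset.Iic i) (pos i).2
  rw [SPInstance.lineWidth_Iic le_rfl (lt_add_of_pos_right _ (I.h_pos i))] at hline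
  linarith [hord.W_lt_w_add_lineWidth hBL hi (hBL i).1.1.2.2 hlt]

lemma h_mul_W_sub_w_le_intervalIntegral_lineWidth (hord : d.IsOrdered) (hBL : I.IsBL pos)
    (hi : i ∉ d.F) :
    (I.r i).h * (I.W - (I.r i).w) ≤ ∫ t in 0..(I.r i).h, I.lineWidth pos (Finset.Iio i) t := by
  have hlow := SPInstance.mul_le_intervalIntegral_lineWidth (I.h_pos i).le fun t ht hti =>
    sub_le_iff_le_add'.2 (hord.W_lt_w_add_lineWidth hBL hi ht.le hti).le
  rwa [sub_zero] at hlow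

lemma h_mul_W_le_area (hord : d.IsOrdered) (hBL : I.IsBL pos) (hi : i ∉ d.F) :
    (I.r i).h * I.W ≤ I.area (Finset.Iic i) := by
  have hlow := (hord.h_mul_W_sub_w_le_intervalIntegral_lineWidth hBL hi).trans
    (SPInstance.intervalIntegral_lineWidth_le_area _ (I.h_pos i).le)
  linarith [SPInstance.area_Iic (I := I) i]

lemma w_le_of_blocks_crossing (hord : d.IsOrdered) (hBL : I.IsBL pos)
    (hmono : Monovary (fun i => (I.r i).w) fun i => (I.r i).h) {m l s : Fin n} (hm : m ∈ d.Q)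
    (hmt : (I.r m).h ≤ t) (hl : l ∈ I.crossing pos (Finset.Iio m) t) (hsl : s ≤ l)
    (hs : (pos l).2 < (pos s).2 + (I.r s).h) : (I.r m).w ≤ (I.r s).w := by
  obtain ⟨hlm, -, htl⟩ := SPInstance.mem_crossing.1 hl
  have hlm := Finset.mem_Iio.1 hlm
  by_cases hsF : s ∈ d.F
  · rw [hord.y_eq_zero hBL hsF, zero_add] at hs
    by_cases hlF : l ∈ d.F
    · rw [hord.y_eq_zero hBL hlF, zero_add] at htl
      exact hmono (hmt.trans_lt (htl.trans_le (hord.h_le_of_mem_F hsl hlF)))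
    · exact (hord.w_le_of_mem_Q hlF hlm.le hm).trans (hmono ((hord.h_le_y hBL hlF).trans_lt hs))
  · exact hord.w_le_of_mem_Q hsF (hsl.trans hlm.le) hm

lemma half_W_le_lineWidth (hord : d.IsOrdered) (hBL : I.IsBL pos)
    (hmono : Monovary (fun i => (I.r i).w) fun i => (I.r i).h) (hi : i ∈ d.Q)
    (ht : 0 ≤ t) (hti : t < (pos i).2) :
    I.W / 2 ≤ I.lineWidth pos (Finset.Iio i) t := by
  obtain ⟨m, hm⟩ : ∃ m, IsLeast {j | t < (pos j).2} m :=
    (Set.toFinite _).isCompact.exists_isLeast ⟨i, hti⟩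
  have hmF : m ∉ d.F := fun h => ht.not_gt (hord.y_eq_zero hBL h ▸ hm.1)
  have hmi : m ≤ i := hm.2 hti
  have hmQ : m ∈ d.Q := hord.mem_Q_of_le hmF hmi hi
  refine le_trans ?_ (SPInstance.lineWidth_mono t (Finset.Iio_subset_Iio hmi))
  rcases lt_or_ge t (I.r m).h with htm | hmt
  · linarith [hord.W_lt_w_add_lineWidth hBL hmF ht htm, FQW.w_le_of_mem_Q hmQ]
  · linarith [hBL.W_le_two_mul_lineWidth ht hm fun l hl s hsl =>
      hord.w_le_of_blocks_crossing hBL hmono hmQ hmt hl hsl]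

lemma top_mul_W_le_of_mem_Q (hord : d.IsOrdered) (hBL : I.IsBL pos)
    (hmono : Monovary (fun i => (I.r i).w) fun i => (I.r i).h) (hi : i ∈ d.Q) :
    ((pos i).2 + (I.r i).h) * I.W ≤ 2 * I.area (Finset.Iic i) := by
  have hiF := notMem_F_of_mem_Q hi
  have hhy := hord.h_le_y hBL hiF
  have hmid : ((pos i).2 - (I.r i).h) * (I.W / 2) ≤
      ∫ t in (I.r i).h..(pos i).2, I.lineWidth pos (Finset.Iio i) t :=
    SPInstance.mul_le_intervalIntegral_lineWidth hhy fun t ht hti =>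
      hord.half_W_le_lineWidth hBL hmono hi ((I.h_pos i).le.trans ht.le) hti
  have hsweep : (I.r i).h * (I.W - (I.r i).w) + ((pos i).2 - (I.r i).h) * (I.W / 2) ≤
      I.area (Finset.Iio i) :=
    calc _ ≤ ∫ t in 0..(pos i).2, I.lineWidth pos (Finset.Iio i) t := by
          rw [← intervalIntegral.integral_add_adjacent_intervals
            (SPInstance.integrable_lineWidth _).intervalIntegrable
            (SPInstance.integrable_lineWidth _).intervalIntegrable]
          exact add_le_add (hord.h_mul_W_sub_w_le_intervalIntegral_lineWidth hBL hiF) hmid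
      _ ≤ I.area (Finset.Iio i) :=
          SPInstance.intervalIntegral_lineWidth_le_area _ (hBL i).1.1.2.2
  linarith [SPInstance.area_Iic (I := I) i]

lemma top_mul_W_le (hord : d.IsOrdered) (hBL : I.IsBL pos)
    (hmono : Monovary (fun i => (I.r i).w) fun i => (I.r i).h) (hi : i ∉ d.F) :
    ((pos i).2 + (I.r i).h) * I.W ≤ 2 * I.area (Finset.Iic i) := by
  induction i using WellFoundedLT.induction with
  | ind i ih =>
    rcases le_or_gt (I.r i).w (I.W / 2) with hnarrow | hwide
    · exact hord.top_mul_W_le_of_mem_Q hBL hmono (mem_Q_of_w_le hi hnarrow)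
    obtain ⟨j, hji, hyi⟩ := hBL.exists_lt_y_le_top ((I.h_pos i).trans_le (hord.h_le_y hBL hi))
    have hh_W {k : Fin n} (hk : I.W / 2 < (I.r k).w) :
        (I.r k).h * I.W ≤ 2 * ((I.r k).w * (I.r k).h) := by nlinarith [I.h_pos k]
    have hyi_W := mul_le_mul_of_nonneg_right hyi I.W_pos.le
    have harea_j : I.area (Finset.Iic j) ≤ I.area (Finset.Iio i) :=
      SPInstance.area_mono fun k hk => Finset.mem_Iio.2 ((Finset.mem_Iic.1 hk).trans_lt hji)
    suffices (pos i).2 * I.W ≤ 2 * I.area (Finset.Iio i) ∨ (pos i).2 ≤ (I.r i).h by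
      rcases this with h | h
      · linarith [hh_W hwide, SPInstance.area_Iic (I := I) i]
      · linarith [hord.h_mul_W_le_area hBL hi, mul_le_mul_of_nonneg_right h I.W_pos.le]
    by_cases hjF : j ∈ d.F
    · rw [hord.y_eq_zero hBL hjF, zero_add] at hyi hyi_W
      rcases le_or_gt (I.r j).h (I.r i).h with hji_h | hij_h
      · exact .inr (hyi.trans hji_h)
      · have hw_j : I.W / 2 < (I.r j).w := hwide.trans_le (hmono hij_h)
        exact .inl (by linarith [hh_W hw_j, SPInstance.w_mul_h_le_area_Iic (I := I) j])
    · exact .inl (by linarith [ih j hji hjF])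

end IsOrdered

end FQW

theorem bl_fqw_squares_two_approx_general {n : ℕ} (I : SPInstance n)
    (hmono : Monovary (fun i => (I.r i).w) fun i => (I.r i).h)
    (d : FQW I) (hord : d.IsOrdered)
    (pos : Fin n → ℝ × ℝ) (hBL : I.IsBL pos) :
    I.height pos ≤ 2 * I.hOPT := by
  have hOPT_nonneg : 0 ≤ I.hOPT := SPInstance.le_hOPT fun _ hf => hf.height_nonneg
  refine Real.iSup_le (fun i => ?_) (by positivity)
  by_cases hi : i ∈ d.F
  · linarith [hord.y_eq_zero hBL hi, SPInstance.h_le_hOPT (I := I) i]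
  · have htop := hord.top_mul_W_le hBL hmono hi
    have harea := SPInstance.area_le_W_mul_hOPT (I := I) (Finset.Iic i)
    exact le_of_mul_le_mul_right (by linarith) I.W_pos

/-- **Theorem (square case).** If all rectangles of an FQW-ordered Strip
Packing instance are squares, then the height of the Bottom-Left packing is at
most twice the optimum height. -/
theorem bl_fqw_squares_two_approx {n : ℕ} (I : SPInstance n)
    (hsq : ∀ i : Fin n, (I.r i).w = (I.r i).h)
    (d : FQW I) (hord : d.IsOrdered)
    (pos : Fin n → ℝ × ℝ) (hBL : I.IsBL pos) :
    I.height pos ≤ 2 * I.hOPT :=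
  bl_fqw_squares_two_approx_general I (fun i j h => by simpa only [hsq] using h.le) d hord pos hBL
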